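/- Let B be a complex Hilbert space, let L : B → B be a bounded normal linear operator (L L* = L* L) with spectral radius r(L) > 1, let a > 0, and let α : [0,a] → [0,∞) be a nondecreasing function satisfying the integrability condition ∫₀^a α(s)/s ds < ∞. Let 𝓕 : B → B satisfy 𝓕(0) = 0 and ‖𝓕(u) − Lu‖ ≤ α(‖u‖)·‖u‖ whenever ‖u‖ ≤ a. Then the equilibrium u = 0 of the iteration u_{n+1} = 𝓕(u_n) is exponentially unstable at the linear rate ρ = r(L): there exist ε > 0 and C > 0 such that for every δ > 0 there is an initial datum u₀ with 0 < ‖u₀‖ ≤ δ whose orbit (u_n) satisfies ‖u_n‖ ≥ C·r(L)ⁿ·‖u₀‖ for every n ∈ ℕ such that max(‖u₀‖, …, ‖u_n‖) ≤ ε. -/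

import Mathlib

open MeasureTheory

section

variable {B : Type*} [NormedAddCommGroup B] [InnerProductSpace ℂ B]

/-- The norm of a normal operator is its spectral radius. -/
lemma norm_eq_of_normal_of_spectralRadius [CompleteSpace B] {L : B →L[ℂ] B}
    (hnormal : L ∘L ContinuousLinearMap.adjoint L = ContinuousLinearMap.adjoint L ∘L L)
    {r : ℝ} (hr : spectralRadius ℂ L = ENNReal.ofReal r) (hr0 : 0 ≤ r) : ‖L‖ = r := by
  have : IsStarNormal L := ⟨hnormal.symm⟩
  have h := IsStarNormal.spectralRadius_eq_nnnorm L
  rw [hr, ENNReal.ofReal, ENNReal.coe_inj] at h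
  have h' := congrArg NNReal.toReal h
  rw [Real.coe_toNNReal _ hr0] at h'
  exact h'.symm

/-- Powers of an operator have norm at least the corresponding power of the spectral radius. -/
lemma pow_le_norm_pow_of_spectralRadius [CompleteSpace B] {L : B →L[ℂ] B} {r : ℝ}
    (hr : spectralRadius ℂ L = ENNReal.ofReal r) (hr0 : 0 < r) (N : ℕ) : r ^ N ≤ ‖L ^ N‖ := by
  have hB : Nontrivial B := by
    by_contra h
    rw [not_nontrivial_iff_subsingleton] at h
    have : Subsingleton (B →L[ℂ] B) := ⟨fun f g => by ext x; exact Subsingleton.elim _ _⟩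
    rw [spectrum.SpectralRadius.of_subsingleton] at hr
    exact absurd (ENNReal.ofReal_eq_zero.1 hr.symm) (not_le.2 hr0)
  obtain ⟨z, hz, hzr⟩ := spectrum.exists_nnnorm_eq_spectralRadius L
  rw [hr, ENNReal.ofReal, ENNReal.coe_inj] at hzr
  have hz' : ‖z‖ = r := by
    have := congrArg NNReal.toReal hzr
    rwa [Real.coe_toNNReal _ hr0.le] at this
  have := spectrum.norm_le_norm_of_mem (spectrum.pow_mem_pow L N hz)
  rwa [norm_pow, hz'] at this

lemma norm_pow_apply_le (L : B →L[ℂ] B) (n : ℕ) (x : B) : ‖(L ^ n) x‖ ≤ ‖L‖ ^ n * ‖x‖ := by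
  induction n with
  | zero => simp
  | succ n ih =>
    rw [pow_succ', mul_apply_eq_comp, pow_succ', mul_assoc]
    exact (L.le_opNorm _).trans (by gcongr)

/-- If `‖L‖ = r` and `r ^ N ≤ ‖L ^ N‖`, some vector of prescribed norm `d` is expanded by `L` almost
at rate `r` for all times up to `N`. -/
lemma exists_norm_eq_forall_le_norm_pow {L : B →L[ℂ] B} {r : ℝ} (hr : 0 < r) (hL : ‖L‖ = r)
    {N : ℕ} (hN : r ^ N ≤ ‖L ^ N‖) {d : ℝ} (hd : 0 < d) :
    ∃ v : B, ‖v‖ = d ∧ ∀ n ≤ N, 3 / 4 * r ^ n * d ≤ ‖(L ^ n) v‖ := by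
  obtain ⟨w, hw⟩ : ∃ w : B, 3 / 4 * r ^ N * ‖w‖ < ‖(L ^ N) w‖ := by
    by_contra! h
    have := (L ^ N).opNorm_le_bound (by positivity) h
    linarith [pow_pos hr N]
  have hw0 : 0 < ‖w‖ := by
    rw [norm_pos_iff]
    rintro rfl
    simp at hw
  have hscale : ‖((d / ‖w‖ : ℝ) : ℂ)‖ = d / ‖w‖ := by
    rw [Complex.norm_real, Real.norm_of_nonneg (by positivity)]
  refine ⟨((d / ‖w‖ : ℝ) : ℂ) • w, ?_, fun n hn => ?_⟩
  · rw [norm_smul, hscale]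
    field_simp
  · have hpow : ‖(L ^ N) w‖ ≤ r ^ (N - n) * ‖(L ^ n) w‖ := by
      have hsplit : (L ^ N) w = (L ^ (N - n)) ((L ^ n) w) := by
        rw [← mul_apply_eq_comp, ← pow_add, Nat.sub_add_cancel hn]
      rw [hsplit, ← hL]
      exact norm_pow_apply_le L _ _
    have hle : 3 / 4 * r ^ n * ‖w‖ ≤ ‖(L ^ n) w‖ := by
      have hrN : r ^ N = r ^ (N - n) * r ^ n := by rw [← pow_add, Nat.sub_add_cancel hn]
      rw [hrN] at hw
      refine le_of_mul_le_mul_left ?_ (pow_pos hr (N - n))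
      linarith
    rw [map_smul, norm_smul, hscale]
    calc 3 / 4 * r ^ n * d = d / ‖w‖ * (3 / 4 * r ^ n * ‖w‖) := by field_simp
      _ ≤ d / ‖w‖ * ‖(L ^ n) w‖ := by gcongr

end

section

variable {α : ℝ → ℝ} {a r : ℝ}

/-- The primitive of `α s / s` increases from `s` to `r * s` by at least `(r - 1) / r * α s`. -/
lemma primitive_add_le_primitive_mul (hα_mono : MonotoneOn α (Set.Icc 0 a))
    (hα_nonneg : ∀ s ∈ Set.Icc (0 : ℝ) a, 0 ≤ α s)
    (hα_int : IntegrableOn (fun s => α s / s) (Set.Ioc 0 a)) (hr : 1 < r)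
    {s : ℝ} (hs : 0 < s) (hsa : r * s ≤ a) :
    (∫ t in Set.Ioc 0 s, α t / t) + (r - 1) / r * α s ≤ ∫ t in Set.Ioc 0 (r * s), α t / t := by
  have hsr : s ≤ r * s := by nlinarith
  have hint : IntegrableOn (fun t => α t / t) (Set.Ioc s (r * s)) :=
    hα_int.mono_set (Set.Ioc_subset_Ioc hs.le hsa)
  rw [← Set.Ioc_union_Ioc_eq_Ioc hs.le hsr,
    setIntegral_union (Set.Ioc_disjoint_Ioc_of_le le_rfl) measurableSet_Ioc
      (hα_int.mono_set (Set.Ioc_subset_Ioc le_rfl (hsr.trans hsa))) hint]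
  have hconst : ∫ _ in Set.Ioc s (r * s), α s / (r * s) = (r - 1) / r * α s := by
    rw [setIntegral_const, Measure.real, Real.volume_Ioc, ENNReal.toReal_ofReal (by linarith),
      smul_eq_mul]
    field_simp
  rw [← hconst]
  refine add_le_add le_rfl ?_
  refine setIntegral_mono_on (integrableOn_const (by simp)) hint measurableSet_Ioc
    fun t ht => ?_
  have hsm : s ∈ Set.Icc 0 a := ⟨hs.le, hsr.trans hsa⟩
  have htm : t ∈ Set.Icc 0 a := ⟨(hs.trans ht.1).le, ht.2.trans hsa⟩
  have := hα_nonneg t htm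
  have := hs.trans ht.1
  have := ht.2
  gcongr
  exact hα_mono hsm htm ht.1.le

lemma primitive_mono (hα_nonneg : ∀ s ∈ Set.Icc (0 : ℝ) a, 0 ≤ α s)
    (hα_int : IntegrableOn (fun s => α s / s) (Set.Ioc 0 a)) {s t : ℝ} (hst : s ≤ t)
    (hta : t ≤ a) : ∫ x in Set.Ioc 0 s, α x / x ≤ ∫ x in Set.Ioc 0 t, α x / x := by
  refine setIntegral_mono_set (hα_int.mono_set (Set.Ioc_subset_Ioc le_rfl hta)) ?_
    (Set.Ioc_subset_Ioc le_rfl hst).eventuallyLE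
  filter_upwards [ae_restrict_mem measurableSet_Ioc] with x hx
  exact div_nonneg (hα_nonneg x ⟨hx.1.le, hx.2.trans hta⟩) hx.1.le

lemma exists_primitive_lt (ha : 0 < a)
    (hα_int : IntegrableOn (fun s => α s / s) (Set.Ioc 0 a)) {c : ℝ} (hc : 0 < c) :
    ∃ t, 0 < t ∧ t ≤ a ∧ ∫ x in Set.Ioc 0 t, α x / x < c := by
  have hcont := intervalIntegral.continuousOn_primitive
    ((integrableOn_Icc_iff_integrableOn_Ioc (by simp)).2 hα_int) 0 ⟨le_rfl, ha.le⟩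
  have hlim := hcont.tendsto.mono_left (nhdsWithin_mono 0 Set.Ioc_subset_Icc_self)
  rw [nhdsWithin_Ioc_eq_nhdsGT ha] at hlim
  have hsmall := hlim.eventually_lt_const (u := c) (by simpa using hc)
  obtain ⟨t, ht, htm⟩ := (hsmall.and (Ioc_mem_nhdsGT ha)).exists
  exact ⟨t, htm.1, htm.2, ht⟩

end

/-- sharpened Rutman–Daleckii theorem in the normal case. If `L` is
a bounded normal operator on a complex Hilbert space with spectral radius
`r = r(L) > 1`, and `‖𝓕(u) - Lu‖ ≤ α(‖u‖)‖u‖` for `‖u‖ ≤ a` with `α` nondecreasing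
and `∫₀^a α(s)/s ds < ∞`, then the origin is exponentially unstable at the linear
rate `r(L)` for the iteration `u_{n+1} = 𝓕(u_n)`. -/
theorem stmt_11 {B : Type*} [NormedAddCommGroup B] [InnerProductSpace ℂ B]
    [CompleteSpace B]
    (L : B →L[ℂ] B)
    (hnormal : L ∘L ContinuousLinearMap.adjoint L = ContinuousLinearMap.adjoint L ∘L L)
    (r : ℝ) (hr : spectralRadius ℂ L = ENNReal.ofReal r) (hr1 : 1 < r)
    (a : ℝ) (ha : 0 < a)
    (α : ℝ → ℝ) (hα_mono : MonotoneOn α (Set.Icc 0 a))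
    (hα_nonneg : ∀ s ∈ Set.Icc (0 : ℝ) a, 0 ≤ α s)
    (hα_int : IntegrableOn (fun s => α s / s) (Set.Ioc 0 a))
    (F : B → B) (hF0 : F 0 = 0)
    (hF : ∀ u : B, ‖u‖ ≤ a → ‖F u - L u‖ ≤ α ‖u‖ * ‖u‖) :
    ∃ ε > (0 : ℝ), ∃ C > (0 : ℝ), ∀ δ > (0 : ℝ), ∃ u : ℕ → B,
      (∀ n, u (n + 1) = F (u n)) ∧ 0 < ‖u 0‖ ∧ ‖u 0‖ ≤ δ ∧
      ∀ n : ℕ, (∀ k ≤ n, ‖u k‖ ≤ ε) → C * r ^ n * ‖u 0‖ ≤ ‖u n‖ := by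
  have hr0 : 0 < r := by linarith
  have hL := norm_eq_of_normal_of_spectralRadius hnormal hr hr0.le
  obtain ⟨t, ht0, hta, ht⟩ := exists_primitive_lt ha hα_int (c := (r - 1) / 8) (by linarith)
  set J : ℝ → ℝ := fun s => ∫ x in Set.Ioc 0 s, α x / x with hJ
  have hJ0 : J 0 = 0 := by simp [hJ]
  set ε : ℝ := t / (4 * r) with hε
  have hε0 : 0 < ε := by positivity
  have hεt : 4 * r * ε = t := by rw [hε]; field_simp
  refine ⟨ε, hε0, 1 / 2, by norm_num, fun δ hδ => ?_⟩
  obtain ⟨d, hd0, hdδ, hdε⟩ : ∃ d : ℝ, 0 < d ∧ d ≤ δ ∧ d ≤ ε :=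
    ⟨min δ ε, lt_min hδ hε0, min_le_left _ _, min_le_right _ _⟩
  obtain ⟨N, hN⟩ := pow_unbounded_of_one_lt (2 * ε / d) hr1
  rw [div_lt_iff₀ hd0] at hN
  obtain ⟨v, hv, hvN⟩ := exists_norm_eq_forall_le_norm_pow hr0 hL
    (pow_le_norm_pow_of_spectralRadius hr hr0 N) hd0
  set u : ℕ → B := fun n => F^[n] v with hu
  have hu0 : u 0 = v := rfl
  have hus : ∀ n, u (n + 1) = F (u n) := fun n => Function.iterate_succ_apply' F n v
  have hup : ∀ n, ‖(L ^ n) v‖ ≤ r ^ n * d := fun n => by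
    simpa only [hL, hv] using norm_pow_apply_le L n v
  -- the deviation from the linear orbit stays a small multiple of the linear growth
  have hquarter : ∀ n, 2 * d * r ^ n ≤ t →
      ‖u n - (L ^ n) v‖ * (r - 1) ≤ 2 * d * r ^ n * J (2 * d * r ^ n) →
      ‖u n - (L ^ n) v‖ ≤ r ^ n * d / 4 := by
    intro n hn he
    have hJn : J (2 * d * r ^ n) ≤ (r - 1) / 8 :=
      (primitive_mono hα_nonneg hα_int hn hta).trans ht.le
    refine le_of_mul_le_mul_right (he.trans ?_) (sub_pos.2 hr1)
    calc 2 * d * r ^ n * J (2 * d * r ^ n) ≤ 2 * d * r ^ n * ((r - 1) / 8) := by gcongr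
      _ = r ^ n * d / 4 * (r - 1) := by ring
  have hlow : ∀ n ≤ N, ‖u n - (L ^ n) v‖ ≤ r ^ n * d / 4 → 1 / 2 * r ^ n * d ≤ ‖u n‖ := by
    intro n hn he
    have h1 := norm_sub_norm_le ((L ^ n) v) (u n)
    rw [norm_sub_rev] at h1
    linarith [hvN n hn]
  have key : ∀ n ≤ N, (∀ k < n, ‖u k‖ ≤ ε) → 2 * d * r ^ n ≤ t ∧
      ‖u n - (L ^ n) v‖ * (r - 1) ≤ 2 * d * r ^ n * J (2 * d * r ^ n) := by
    intro n
    induction n with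
    | zero =>
      intro _ _
      have h2 : 2 * d * r ^ 0 ≤ t := by rw [pow_zero]; nlinarith
      refine ⟨h2, ?_⟩
      have hJn : J 0 ≤ J (2 * d * r ^ 0) :=
        primitive_mono hα_nonneg hα_int (by positivity) (h2.trans hta)
      rw [hJ0] at hJn
      simpa [hu0] using mul_nonneg (by positivity : (0 : ℝ) ≤ 2 * d * r ^ 0) hJn
    | succ n ih =>
      intro hnN hk
      obtain ⟨hnt, he⟩ := ih (by omega) fun k hkn => hk k (by omega)
      have hq := hquarter n hnt he
      have hl := hlow n (by omega) hq
      have hun := hk n (by omega)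
      have hs : 2 * d * r ^ (n + 1) = r * (2 * d * r ^ n) := by ring
      have hst : r * (2 * d * r ^ n) ≤ t := by
        rw [← hεt]
        nlinarith
      rw [hs]
      refine ⟨hst, ?_⟩
      set s := 2 * d * r ^ n with hsdef
      have hs0 : 0 < s := by positivity
      have hus' : ‖u n‖ ≤ s := by
        have h1 := norm_sub_norm_le (u n) ((L ^ n) v)
        have h2 := hup n
        have h3 : 0 < r ^ n * d := by positivity
        rw [hsdef]
        linarith
      have hsa : s ≤ a := hnt.trans hta
      have hαs : α ‖u n‖ ≤ α s :=
        hα_mono ⟨norm_nonneg _, hus'.trans hsa⟩ ⟨hs0.le, hsa⟩ hus'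
      have hαs0 := hα_nonneg s ⟨hs0.le, hsa⟩
      have hstep : ‖u (n + 1) - (L ^ (n + 1)) v‖ ≤ r * ‖u n - (L ^ n) v‖ + α s * s := by
        have hsplit : u (n + 1) - (L ^ (n + 1)) v
            = L (u n - (L ^ n) v) + (F (u n) - L (u n)) := by
          rw [hus, pow_succ', mul_apply_eq_comp, map_sub]
          abel
        rw [hsplit]
        refine (norm_add_le _ _).trans (add_le_add ?_ ?_)
        · exact (L.le_opNorm _).trans_eq (by rw [hL])
        · exact (hF _ (hus'.trans hsa)).trans (by gcongr)
      have hJs : J s + (r - 1) / r * α s ≤ J (r * s) :=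
        primitive_add_le_primitive_mul hα_mono hα_nonneg hα_int hr1 hs0 (hst.trans hta)
      have hr1' : 0 ≤ r - 1 := by linarith
      calc ‖u (n + 1) - (L ^ (n + 1)) v‖ * (r - 1)
          ≤ (r * ‖u n - (L ^ n) v‖ + α s * s) * (r - 1) := by gcongr
        _ = r * (‖u n - (L ^ n) v‖ * (r - 1)) + α s * s * (r - 1) := by ring
        _ ≤ r * (s * J s) + α s * s * (r - 1) := by gcongr
        _ = r * s * (J s + (r - 1) / r * α s) := by field_simp
        _ ≤ r * s * J (r * s) := by gcongr
  have hbound : ∀ n ≤ N, (∀ k < n, ‖u k‖ ≤ ε) → 1 / 2 * r ^ n * d ≤ ‖u n‖ := fun n hn hk =>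
    hlow n hn (hquarter n (key n hn hk).1 (key n hn hk).2)
  refine ⟨u, hus, by rw [hu0, hv]; exact hd0, by rw [hu0, hv]; exact hdδ, fun n hn => ?_⟩
  rw [hu0, hv]
  rcases le_or_gt n N with hnN | hnN
  · exact hbound n hnN fun k hk => hn k hk.le
  · have h1 := hbound N le_rfl fun k hk => hn k (by omega)
    have h2 := hn N hnN.le
    linarith
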